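/- Let G be a negative definite symmetric integer matrix on a finite set V whose off-diagonal entries lie in {0,1} and whose associated graph is a forest, with an unweighted vertex v₀ attached via ε : V → {0,1} having at most one attaching vertex in each connected component. Let v ∈ V and let m be a choice of maxima in the direction v tuned to v₀. For every characteristic vector K and every E ⊆ V with v ∉ E: if m̃([K,E]) > 0 then h_V([K+v,E]) ≥ h_V([K,E]) (equivalently h_V([K, E∪{v}]) = h_V([K,E])), and if m̃([K,E]) < 0 then h_V([K−v,E]) ≥ h_V([K,E]) (equivalently h_V([K−v, E∪{v}]) = h_V([K,E])). Hence the step in a contraction homotopy determined by a tuned choice of maxima is filtered with respect to both h_U and h_V. -/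

import Mathlib

/-!
The height `h_U([K, E])` is `h_U(K)` plus the least of the integers `K(I) + ∑_{u,w ∈ I} G u w`, `I ⊆ E`
(`hUcube_eq`); the same formula with `K + v₀` in place of `K` computes `h_V`. Along the line
`i ↦ K + i v` the height `h_U` is then strictly concave, because each competing subset contributes an
affine function of `i` and `i² G v v` has negative leading coefficient (`cubeWeight_concave`).
Moreover, for characteristic `K`, the increments of `h_U` along this line are even
(`even_cubeWeight`).

Suppose the tuned maximum lies in the direction `σ = ±1` from `K`. By concavity, either the step to
`K + σ v` strictly raises `h_U`, hence by at least `2`, or `K` and `K + σ v` are both maximizers and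
the tuned maximum is `K + σ v`, where the tuning condition is exactly the claim for `h_V`. In the
former case it suffices that the increment of `h_V` is at least that of `h_U` minus `2`
(`increment_bound`). To see this, delete `v` from the forest and split `E` into the part `T` lying in
components which contain an attaching vertex and the remainder `R`. The least weight is additive over
this splitting, and the contributions of `R` to the two increments agree. At most one vertex of `T` is
adjacent to `v`, and none if `v` itself is attached to `v₀`; so the contributions of `T` both lie in
an interval of length `2`, or both vanish when `v` is attached, in which case the whole difference is
the explicit term `2 σ`.
-/

open Matrix Finset

variable {V : Type*}

/-- Negative definiteness of a symmetric integer matrix, as a quadratic form over `ℚ`. -/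
def MatNegDef [Fintype V] (G : Matrix V V ℤ) : Prop :=
  ∀ x : V → ℚ, x ≠ 0 → x ⬝ᵥ (G.map (Int.cast : ℤ → ℚ)).mulVec x < 0

/-- `K` is a characteristic vector for `G`: `K v ≡ G v v (mod 2)` for all `v`. -/
def IsCharacteristic [Fintype V] (G : Matrix V V ℤ) (K : V → ℤ) : Prop :=
  ∀ v : V, (2 : ℤ) ∣ (K v - G v v)

/-- The translate `K + x` of a characteristic vector by `x : V → ℤ`. -/
def chTrans [Fintype V] (G : Matrix V V ℤ) (K : V → ℤ) (x : V → ℤ) : V → ℤ :=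
  fun u => K u + 2 * G.mulVec x u

/-- `i` times the standard basis vector at `v`. -/
def dirVec [DecidableEq V] (v : V) (i : ℤ) : V → ℤ := fun u => if u = v then i else 0

/-- The height function `h_U(K) = (Kᵀ G⁻¹ K + s)/4`. -/
noncomputable def hU [Fintype V] [DecidableEq V] (G : Matrix V V ℤ) (K : V → ℤ) : ℚ :=
  ((fun u => (K u : ℚ)) ⬝ᵥ ((G.map (Int.cast : ℤ → ℚ))⁻¹).mulVec (fun u => (K u : ℚ))
      + (Fintype.card V : ℚ)) / 4

/-- The height of a cube: `h_U([K,E]) = min_{I ⊆ E} h_U(K + Σ_{v ∈ I} e_v)`. -/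
noncomputable def hUcube [Fintype V] [DecidableEq V] (G : Matrix V V ℤ) (K : V → ℤ)
    (E : Finset V) : ℚ :=
  E.powerset.inf' (Finset.powerset_nonempty _)
    (fun I => hU G (chTrans G K (fun u => if u ∈ I then (1 : ℤ) else 0)))

/-- The translate `K + v₀` by the unweighted vertex, attached via `ε`. -/
def knotTrans (K ε : V → ℤ) : V → ℤ := fun u => K u + 2 * ε u

/-- The second height function `h_V([K,E]) = h_U([K + v₀, E])`. -/
noncomputable def hVcube [Fintype V] [DecidableEq V] (G : Matrix V V ℤ) (ε : V → ℤ)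
    (K : V → ℤ) (E : Finset V) : ℚ :=
  hUcube G (knotTrans K ε) E

/-- The graph of `G`: an edge between `u ≠ w` exactly when `G u w = 1`. -/
def graphOf (G : Matrix V V ℤ) : SimpleGraph V :=
  SimpleGraph.fromRel (fun u w => G u w = 1)

/-- The (unique, in a forest) path from `x` to `v` passes through `u`. -/
def onPath (Γ : SimpleGraph V) (x v u : V) : Prop :=
  ∃ p : Γ.Walk x v, p.IsPath ∧ u ∈ p.support

/-- `E_u^v`: the elements of `E` whose path to `v` passes through `u`. -/
noncomputable def Esub (Γ : SimpleGraph V) (E : Finset V) (u v : V) : Finset V :=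
  @Finset.filter _ (fun x => onPath Γ x v u) (Classical.decPred _) E

/-! ### Least weights of cubes -/

/-- The integral weight `K(I) + ∑_{u,w ∈ I} G u w`, which is `h_U(K + ∑_{u ∈ I} e_u) - h_U(K)`. -/
def vertexWeight (G : Matrix V V ℤ) (K : V → ℤ) (I : Finset V) : ℤ :=
  ∑ u ∈ I, K u + ∑ u ∈ I, ∑ w ∈ I, G u w

/-- The least weight of a subset of `E`, which is `h_U([K,E]) - h_U(K)`. -/
def cubeWeight (G : Matrix V V ℤ) (K : V → ℤ) (E : Finset V) : ℤ :=
  E.powerset.inf' (Finset.powerset_nonempty _) (vertexWeight G K)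

theorem cubeWeight_le (G : Matrix V V ℤ) (K : V → ℤ) {E I : Finset V} (h : I ⊆ E) :
    cubeWeight G K E ≤ vertexWeight G K I :=
  Finset.inf'_le _ (Finset.mem_powerset.2 h)

theorem exists_cubeWeight (G : Matrix V V ℤ) (K : V → ℤ) (E : Finset V) :
    ∃ I ⊆ E, cubeWeight G K E = vertexWeight G K I := by
  obtain ⟨I, hI, h⟩ := Finset.exists_mem_eq_inf' (Finset.powerset_nonempty E) (vertexWeight G K)
  exact ⟨I, Finset.mem_powerset.1 hI, h⟩

theorem vertexWeight_add (G : Matrix V V ℤ) (K L : V → ℤ) (I : Finset V) :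
    vertexWeight G (fun u => K u + L u) I = vertexWeight G K I + ∑ u ∈ I, L u := by
  simp only [vertexWeight, Finset.sum_add_distrib]; ring

/-- A perturbation of `K` whose sums over subsets of `E` lie in `[c, d]` moves the least weight by
an amount in `[c, d]`. -/
theorem cubeWeight_add_bounds (G : Matrix V V ℤ) (K L : V → ℤ) (E : Finset V) (c d : ℤ)
    (h : ∀ I ⊆ E, c ≤ ∑ u ∈ I, L u ∧ ∑ u ∈ I, L u ≤ d) :
    cubeWeight G K E + c ≤ cubeWeight G (fun u => K u + L u) E ∧
      cubeWeight G (fun u => K u + L u) E ≤ cubeWeight G K E + d := by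
  constructor
  · obtain ⟨I, hI, e⟩ := exists_cubeWeight G (fun u => K u + L u) E
    rw [e, vertexWeight_add]
    linarith [cubeWeight_le G K hI, (h I hI).1]
  · obtain ⟨I, hI, e⟩ := exists_cubeWeight G K E
    have := cubeWeight_le G (fun u => K u + L u) hI
    rw [vertexWeight_add] at this
    linarith [(h I hI).2]

/-- Concavity of the least weight along a line, as a minimum of affine functions. -/
theorem cubeWeight_concave (G : Matrix V V ℤ) (K L : V → ℤ) (E : Finset V) (m : ℤ) (hm : 1 ≤ m) :
    (m - 1) * cubeWeight G K E + cubeWeight G (fun u => K u + m * L u) E ≤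
      m * cubeWeight G (fun u => K u + L u) E := by
  obtain ⟨I, hI, e⟩ := exists_cubeWeight G (fun u => K u + L u) E
  have h1 := cubeWeight_le G K hI
  have h2 := cubeWeight_le G (fun u => K u + m * L u) hI
  rw [vertexWeight_add G K (fun u => m * L u), ← Finset.mul_sum] at h2
  rw [e, vertexWeight_add]
  nlinarith [mul_le_mul_of_nonneg_left h1 (by linarith : 0 ≤ m - 1)]

theorem vertexWeight_union [DecidableEq V] (G : Matrix V V ℤ) (K : V → ℤ) {I J : Finset V}
    (hd : Disjoint I J) (h : ∀ u ∈ I, ∀ w ∈ J, G u w = 0 ∧ G w u = 0) :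
    vertexWeight G K (I ∪ J) = vertexWeight G K I + vertexWeight G K J := by
  simp only [vertexWeight, Finset.sum_union hd, Finset.sum_add_distrib]
  rw [Finset.sum_eq_zero (f := fun u => ∑ w ∈ J, G u w) (s := I)
      (fun u hu => Finset.sum_eq_zero fun w hw => (h u hu w hw).1),
    Finset.sum_eq_zero (f := fun u => ∑ w ∈ I, G u w) (s := J)
      (fun u hu => Finset.sum_eq_zero fun w hw => (h w hw u hu).2)]
  ring

theorem cubeWeight_union [DecidableEq V] (G : Matrix V V ℤ) (K : V → ℤ) {S T : Finset V}
    (hd : Disjoint S T) (h : ∀ u ∈ S, ∀ w ∈ T, G u w = 0 ∧ G w u = 0) :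
    cubeWeight G K (S ∪ T) = cubeWeight G K S + cubeWeight G K T := by
  have key : ∀ I ⊆ S, ∀ J ⊆ T,
      vertexWeight G K (I ∪ J) = vertexWeight G K I + vertexWeight G K J := fun I hI J hJ =>
    vertexWeight_union G K (Finset.disjoint_of_subset_left hI (Finset.disjoint_of_subset_right hJ hd))
      fun u hu w hw => h u (hI hu) w (hJ hw)
  apply le_antisymm
  · obtain ⟨I, hI, e⟩ := exists_cubeWeight G K S
    obtain ⟨J, hJ, e'⟩ := exists_cubeWeight G K T
    rw [e, e', ← key I hI J hJ]
    exact cubeWeight_le G K (Finset.union_subset_union hI hJ)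
  · obtain ⟨I, hI, e⟩ := exists_cubeWeight G K (S ∪ T)
    have e2 : I = (I ∩ S) ∪ (I ∩ T) := by
      rw [← Finset.inter_union_distrib_left, Finset.inter_eq_left.2 hI]
    rw [e, e2, key _ Finset.inter_subset_right _ Finset.inter_subset_right]
    exact add_le_add (cubeWeight_le G K Finset.inter_subset_right)
      (cubeWeight_le G K Finset.inter_subset_right)

theorem cubeWeight_congr (G : Matrix V V ℤ) {K L : V → ℤ} {E : Finset V}
    (h : ∀ u ∈ E, K u = L u) : cubeWeight G K E = cubeWeight G L E := by
  refine Finset.inf'_congr _ rfl fun I hI => ?_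
  rw [vertexWeight, vertexWeight,
    Finset.sum_congr rfl fun u hu => h u (Finset.mem_powerset.1 hI hu)]

theorem even_vertexWeight [Fintype V] [DecidableEq V] {G : Matrix V V ℤ} (hsym : G.IsSymm)
    {K : V → ℤ} (hK : IsCharacteristic G K) (I : Finset V) : Even (vertexWeight G K I) := by
  induction I using Finset.induction_on with
  | empty => simp [vertexWeight]
  | insert a s ha ih =>
    obtain ⟨k, hk⟩ := hK a
    obtain ⟨r, hr⟩ := ih
    have e : ∑ u ∈ s, G u a = ∑ u ∈ s, G a u := Finset.sum_congr rfl fun u _ => hsym.apply a u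
    refine ⟨r + k + G a a + ∑ u ∈ s, G a u, ?_⟩
    simp only [vertexWeight, Finset.sum_insert ha, Finset.sum_add_distrib] at hr ⊢
    rw [e]
    linarith

theorem even_cubeWeight [Fintype V] [DecidableEq V] {G : Matrix V V ℤ} (hsym : G.IsSymm)
    {K : V → ℤ} (hK : IsCharacteristic G K) (E : Finset V) : Even (cubeWeight G K E) := by
  obtain ⟨I, -, e⟩ := exists_cubeWeight G K E
  exact e ▸ even_vertexWeight hsym hK I

/-! ### Height functions in terms of least weights -/

theorem MatNegDef.isUnit_det [Fintype V] [DecidableEq V] {G : Matrix V V ℤ} (h : MatNegDef G) :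
    IsUnit (G.map (Int.cast : ℤ → ℚ)).det := by
  rw [isUnit_iff_ne_zero]
  intro h0
  obtain ⟨x, hx, hx'⟩ := Matrix.exists_mulVec_eq_zero_iff.2 h0
  have := h x hx
  simp [hx'] at this

theorem MatNegDef.diag_neg [Fintype V] [DecidableEq V] {G : Matrix V V ℤ} (h : MatNegDef G)
    (v : V) : G v v < 0 := by
  have := h (Pi.single v 1) (by simp)
  simpa using this

/-- Expansion of the quadratic function `h_U` at `K`. -/
theorem hU_chTrans [Fintype V] [DecidableEq V] {G : Matrix V V ℤ} (hsym : G.IsSymm)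
    (hneg : MatNegDef G) (K x : V → ℤ) :
    hU G (chTrans G K x) = hU G K + ((K ⬝ᵥ x + x ⬝ᵥ G.mulVec x : ℤ) : ℚ) := by
  have hu := hneg.isUnit_det
  have hs : (G.map (Int.cast : ℤ → ℚ)).IsSymm := hsym.map _
  set A := G.map (Int.cast : ℤ → ℚ) with hA
  set k : V → ℚ := fun u => (K u : ℚ) with hk
  set y : V → ℚ := fun u => (x u : ℚ) with hy
  have hc : (fun u => ((chTrans G K x u : ℤ) : ℚ)) = k + (2 : ℚ) • A.mulVec y := by
    ext u
    simp [chTrans, hk, hy, hA, Matrix.mulVec, dotProduct]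
  have h1 : A⁻¹.mulVec (A.mulVec y) = y := by
    rw [Matrix.mulVec_mulVec, Matrix.nonsing_inv_mul _ hu, Matrix.one_mulVec]
  have h2 : ∀ z : V → ℚ, A.mulVec y ⬝ᵥ A⁻¹.mulVec z = y ⬝ᵥ z := by
    intro z
    have : A.mulVec y = Matrix.vecMul y A := by
      rw [← Matrix.mulVec_transpose, hs.eq]
    rw [this, ← Matrix.dotProduct_mulVec, Matrix.mulVec_mulVec, Matrix.mul_nonsing_inv _ hu,
      Matrix.one_mulVec]
  have h3 : ((K ⬝ᵥ x + x ⬝ᵥ G.mulVec x : ℤ) : ℚ) = k ⬝ᵥ y + y ⬝ᵥ A.mulVec y := by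
    simp [hk, hy, hA, Matrix.mulVec, dotProduct]
  rw [hU, hU, hc, h3, Matrix.mulVec_add, Matrix.mulVec_smul, h1, add_dotProduct, dotProduct_add,
    dotProduct_add, smul_dotProduct, smul_dotProduct, h2, dotProduct_smul, dotProduct_smul,
    dotProduct_comm (A.mulVec y) y, dotProduct_comm y k]
  simp only [smul_eq_mul]
  ring

theorem hUcube_eq [Fintype V] [DecidableEq V] {G : Matrix V V ℤ} (hsym : G.IsSymm)
    (hneg : MatNegDef G) (K : V → ℤ) (E : Finset V) :
    hUcube G K E = hU G K + (cubeWeight G K E : ℚ) := by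
  have key : ∀ I : Finset V, hU G (chTrans G K (fun u => if u ∈ I then (1 : ℤ) else 0)) =
      hU G K + (vertexWeight G K I : ℚ) := by
    intro I
    rw [hU_chTrans hsym hneg]
    congr 2
    simp [vertexWeight, dotProduct, Matrix.mulVec]
  simp only [hUcube, key]
  apply le_antisymm
  · obtain ⟨I, hI, e⟩ := exists_cubeWeight G K E
    rw [e]
    exact Finset.inf'_le (fun I => hU G K + (vertexWeight G K I : ℚ)) (Finset.mem_powerset.2 hI)
  · refine Finset.le_inf' _ _ fun I hI => ?_
    have := cubeWeight_le G K (Finset.mem_powerset.1 hI)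
    gcongr

theorem chTrans_dirVec [Fintype V] [DecidableEq V] (G : Matrix V V ℤ) (K : V → ℤ) (v : V) (i : ℤ) :
    chTrans G K (dirVec v i) = fun u => K u + i * (2 * G u v) := by
  ext u
  simp [chTrans, dirVec, Matrix.mulVec, dotProduct]
  ring

theorem hUcube_dirVec [Fintype V] [DecidableEq V] {G : Matrix V V ℤ} (hsym : G.IsSymm)
    (hneg : MatNegDef G) (K : V → ℤ) (E : Finset V) (v : V) (i : ℤ) :
    hUcube G (chTrans G K (dirVec v i)) E = hU G K +
      ((i * K v + i ^ 2 * G v v + cubeWeight G (fun u => K u + i * (2 * G u v)) E : ℤ) : ℚ) := by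
  rw [hUcube_eq hsym hneg, hU_chTrans hsym hneg, chTrans_dirVec]
  have : K ⬝ᵥ dirVec v i + dirVec v i ⬝ᵥ G.mulVec (dirVec v i) = i * K v + i ^ 2 * G v v := by
    simp [dirVec, Matrix.mulVec, dotProduct]
    ring
  rw [this]
  push_cast
  ring

theorem chTrans_chTrans [Fintype V] (G : Matrix V V ℤ) (K x y : V → ℤ) :
    chTrans G (chTrans G K x) y = chTrans G K (x + y) := by
  ext u
  simp only [chTrans, Matrix.mulVec_add, Pi.add_apply]
  ring

theorem knotTrans_chTrans [Fintype V] (G : Matrix V V ℤ) (K ε x : V → ℤ) :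
    knotTrans (chTrans G K x) ε = chTrans G (knotTrans K ε) x := by
  ext u
  simp only [chTrans, knotTrans]
  ring

/-- The cube `[K, E ∪ {v}]` has the two faces `[K, E]` and `[K + v, E]` in the direction `v`. -/
theorem hUcube_insert [Fintype V] [DecidableEq V] (G : Matrix V V ℤ) (K : V → ℤ)
    {E : Finset V} {v : V} (hv : v ∉ E) :
    hUcube G K (insert v E) = min (hUcube G K E) (hUcube G (chTrans G K (dirVec v 1)) E) := by
  have key : ∀ I ⊆ E, hU G (chTrans G (chTrans G K (dirVec v 1))
        (fun u => if u ∈ I then (1 : ℤ) else 0)) =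
      hU G (chTrans G K (fun u => if u ∈ insert v I then (1 : ℤ) else 0)) := by
    intro I hI
    rw [chTrans_chTrans]
    congr 2
    ext u
    have hvI : v ∉ I := fun h => hv (hI h)
    by_cases h : u = v
    · subst h; simp [dirVec, hvI]
    · simp [dirVec, h]
  set F : Finset V → ℚ := fun I => hU G (chTrans G K (fun u => if u ∈ I then (1 : ℤ) else 0)) with hF
  apply le_antisymm
  · refine le_min (Finset.le_inf' _ _ fun I hI => ?_) (Finset.le_inf' _ _ fun I hI => ?_)
    · exact Finset.inf'_le F (Finset.mem_powerset.2
        ((Finset.mem_powerset.1 hI).trans (Finset.subset_insert _ _)))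
    · rw [key I (Finset.mem_powerset.1 hI)]
      exact Finset.inf'_le F (Finset.mem_powerset.2
        (Finset.insert_subset_insert _ (Finset.mem_powerset.1 hI)))
  · refine Finset.le_inf' _ _ fun I hI => ?_
    rw [Finset.mem_powerset] at hI
    by_cases h : v ∈ I
    · have hsub : I.erase v ⊆ E := Finset.subset_insert_iff.1 hI
      refine (min_le_right _ _).trans ((Finset.inf'_le _ (Finset.mem_powerset.2 hsub)).trans ?_)
      rw [key _ hsub, Finset.insert_erase h]
    · exact (min_le_left _ _).trans (Finset.inf'_le F (Finset.mem_powerset.2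
        ((Finset.subset_insert_iff_of_notMem h).1 hI)))

/-! ### Branches of the forest at `v` -/

/-- The graph obtained from `Γ` by deleting all edges at `v`. -/
def isolate (Γ : SimpleGraph V) (v : V) : SimpleGraph V where
  Adj a b := Γ.Adj a b ∧ a ≠ v ∧ b ≠ v
  symm := ⟨fun _ _ h => ⟨h.1.symm, h.2.2, h.2.1⟩⟩
  loopless := ⟨fun _ h => h.1.ne rfl⟩

theorem isolate_le (Γ : SimpleGraph V) (v : V) : isolate Γ v ≤ Γ := fun _ _ h => h.1

/-- In a forest, each branch at `v` contains a single neighbour of `v`, because the edge from `v` to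
that neighbour is a bridge. -/
theorem eq_of_adj_of_isolate_reachable {Γ : SimpleGraph V} (hΓ : Γ.IsAcyclic) {v x y : V}
    (hx : Γ.Adj v x) (hy : Γ.Adj v y) (h : (isolate Γ v).Reachable y x) : y = x := by
  by_contra hne
  have hb := SimpleGraph.isAcyclic_iff_forall_adj_isBridge.1 hΓ hx
  rw [SimpleGraph.isBridge_iff] at hb
  have hle : isolate Γ v ≤ Γ.deleteEdges {s(v, x)} := by
    intro a b hab
    simp only [SimpleGraph.deleteEdges_adj, Set.mem_singleton_iff, Sym2.eq_iff]
    exact ⟨hab.1, fun h => h.elim (fun h => hab.2.1 h.1) fun h => hab.2.2 h.2⟩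
  refine hb ?_
  refine (SimpleGraph.Adj.reachable ?_).trans (h.mono hle)
  simp only [SimpleGraph.deleteEdges_adj, Set.mem_singleton_iff, Sym2.eq_iff]
  exact ⟨hy, fun h => h.elim (fun h => hne h.2) fun h => hx.ne h.1⟩

/-- After deleting `v`, only components containing an attaching vertex see `v₀`, and at most one of
them is adjacent to `v`, through a single vertex; on it, a step along `±v` changes the least weight by an amount in an interval of
length `2`. Hence passing from `K` to `K + v₀` lowers the increment along `±v` by at most `2`. -/
theorem increment_bound [Fintype V] [DecidableEq V] (G : Matrix V V ℤ) (hsym : G.IsSymm)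
    (hoff : ∀ u w : V, u ≠ w → G u w = 0 ∨ G u w = 1)
    (hforest : (graphOf G).IsAcyclic)
    (ε : V → ℤ) (hε : ∀ u, ε u = 0 ∨ ε u = 1)
    (hatt : ∀ u w : V, ε u = 1 → ε w = 1 → (graphOf G).Reachable u w → u = w)
    (v : V) (E : Finset V) (hv : v ∉ E) (K : V → ℤ) (σ : ℤ) (hσ : σ = 1 ∨ σ = -1) :
    -2 ≤ 2 * σ * ε v +
      (cubeWeight G (fun u => knotTrans K ε u + σ * (2 * G u v)) E
        - cubeWeight G (knotTrans K ε) E) -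
      (cubeWeight G (fun u => K u + σ * (2 * G u v)) E - cubeWeight G K E) := by
  classical
  have adj_of : ∀ a b, a ≠ b → G a b ≠ 0 → (graphOf G).Adj a b := by
    intro a b hab h
    rw [graphOf, SimpleGraph.fromRel_adj]
    exact ⟨hab, Or.inl ((hoff a b hab).resolve_left h)⟩
  set P : V → Prop := fun x => ∃ q, q ≠ v ∧ ε q = 1 ∧ (isolate (graphOf G) v).Reachable x q with hP
  set T := E.filter P with hT
  set R := E.filter (fun x => ¬ P x) with hR
  have hne : ∀ x ∈ E, x ≠ v := fun x hx h => hv (h ▸ hx)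
  have hE : E = T ∪ R := (Finset.filter_union_filter_not_eq P E).symm
  have hd : Disjoint T R := Finset.disjoint_filter_filter_not E E P
  have h0 : ∀ u ∈ T, ∀ w ∈ R, G u w = 0 ∧ G w u = 0 := by
    intro u hu w hw
    rw [hT, Finset.mem_filter] at hu
    rw [hR, Finset.mem_filter] at hw
    rw [hsym.apply u w, and_self]
    by_contra h
    obtain ⟨q, hq, hq1, hr⟩ := hu.2
    have huw : u ≠ w := fun e => hw.2 (e ▸ hu.2)
    have hadj : (isolate (graphOf G) v).Adj w u :=
      ⟨(adj_of u w huw h).symm, hne w hw.1, hne u hu.1⟩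
    exact hw.2 ⟨q, hq, hq1, hadj.reachable.trans hr⟩
  have hεR : ∀ u ∈ R, ε u = 0 := by
    intro u hu
    rw [hR, Finset.mem_filter] at hu
    exact (hε u).resolve_right fun h => hu.2 ⟨u, hne u hu.1, h, SimpleGraph.Reachable.refl u⟩
  have hsplit : ∀ L, cubeWeight G L E = cubeWeight G L T + cubeWeight G L R := fun L => by
    conv_lhs => rw [hE]
    exact cubeWeight_union G L hd h0
  have hR1 : cubeWeight G (fun u => knotTrans K ε u + σ * (2 * G u v)) R =
      cubeWeight G (fun u => K u + σ * (2 * G u v)) R :=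
    cubeWeight_congr G fun u hu => by simp [knotTrans, hεR u hu]
  have hR2 : cubeWeight G (knotTrans K ε) R = cubeWeight G K R :=
    cubeWeight_congr G fun u hu => by simp [knotTrans, hεR u hu]
  have hTv : ∀ x ∈ T, G x v ≠ 0 → (graphOf G).Adj v x ∧
      ∃ q, q ≠ v ∧ ε q = 1 ∧ (isolate (graphOf G) v).Reachable x q := by
    intro x hx h
    rw [hT, Finset.mem_filter] at hx
    exact ⟨(adj_of x v (hne x hx.1) h).symm, hx.2⟩
  have hsum : ∀ I ⊆ T, 0 ≤ ∑ u ∈ I, G u v ∧ ∑ u ∈ I, G u v ≤ 1 - ε v := by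
    intro I hI
    by_cases hx : ∃ x ∈ I, G x v ≠ 0
    · obtain ⟨x, hxI, hx0⟩ := hx
      obtain ⟨hxv, q, hqv, hq, hxq⟩ := hTv x (hI hxI) hx0
      have hvq := hxv.reachable.trans (hxq.mono (isolate_le _ v))
      have hεv : ε v = 0 := (hε v).resolve_right fun h => hqv (hatt v q h hq hvq).symm
      rw [Finset.sum_eq_single_of_mem x hxI, hεv]
      · rcases hoff x v hxv.ne' with h | h <;> rw [h] <;> norm_num
      · intro y hyI hyx
        by_contra hy0
        obtain ⟨hyv, q', -, hq', hyq⟩ := hTv y (hI hyI) hy0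
        have hvq' := hyv.reachable.trans (hyq.mono (isolate_le _ v))
        have hqq : q' = q := hatt q' q hq' hq (hvq'.symm.trans hvq)
        exact hyx (eq_of_adj_of_isolate_reachable hforest hxv hyv
          (hyq.trans (hqq ▸ hxq.symm)))
    · push Not at hx
      rw [Finset.sum_eq_zero hx]
      rcases hε v with h | h <;> rw [h] <;> norm_num
  rw [hsplit, hsplit, hsplit, hsplit, hR1, hR2]
  rcases hσ with rfl | rfl
  · have hb := fun L : V → ℤ => cubeWeight_add_bounds G L (fun u => 1 * (2 * G u v)) T 0
      (2 * (1 - ε v)) fun I hI => by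
        rw [← Finset.mul_sum, ← Finset.mul_sum]
        constructor <;> linarith [hsum I hI]
    obtain ⟨h1, h1'⟩ := hb K
    obtain ⟨h2, h2'⟩ := hb (knotTrans K ε)
    rcases hε v with h | h <;> linarith
  · have hb := fun L : V → ℤ => cubeWeight_add_bounds G L (fun u => -1 * (2 * G u v)) T
      (-(2 * (1 - ε v))) 0 fun I hI => by
        rw [← Finset.mul_sum, ← Finset.mul_sum]
        constructor <;> linarith [hsum I hI]
    obtain ⟨h1, h1'⟩ := hb K
    obtain ⟨h2, h2'⟩ := hb (knotTrans K ε)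
    rcases hε v with h | h <;> linarith

/-! ### The step towards a tuned maximum -/

/-- The filtration statement in the direction `σ = ±1`: if the tuned maximum lies at `σ m` with
`m ≥ 1`, then the step along `σ` does not lower `h_V`. -/
theorem hVcube_step [Fintype V] [DecidableEq V] (G : Matrix V V ℤ) (hsym : G.IsSymm)
    (hneg : MatNegDef G)
    (hoff : ∀ u w : V, u ≠ w → G u w = 0 ∨ G u w = 1)
    (hforest : (graphOf G).IsAcyclic)
    (ε : V → ℤ) (hε : ∀ u, ε u = 0 ∨ ε u = 1)
    (hatt : ∀ u w : V, ε u = 1 → ε w = 1 → (graphOf G).Reachable u w → u = w)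
    (v : V) (E : Finset V) (hv : v ∉ E) (K : V → ℤ) (hK : IsCharacteristic G K)
    (σ m : ℤ) (hσ : σ = 1 ∨ σ = -1) (hm : 1 ≤ m)
    (hmax : hUcube G K E ≤ hUcube G (chTrans G K (dirVec v (σ * m))) E)
    (htuned : hUcube G K E = hUcube G (chTrans G K (dirVec v (σ * m))) E →
      hVcube G ε K E ≤ hVcube G ε (chTrans G K (dirVec v (σ * m))) E) :
    hVcube G ε K E ≤ hVcube G ε (chTrans G K (dirVec v σ)) E := by
  have hσ2 : σ ^ 2 = 1 := by rcases hσ with rfl | rfl <;> norm_num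
  have hG := hneg.diag_neg v
  have hconc := cubeWeight_concave G K (fun u => σ * (2 * G u v)) E m hm
  have hcm : (fun u => K u + m * (σ * (2 * G u v))) = fun u => K u + σ * m * (2 * G u v) := by
    ext u; ring
  rw [hcm] at hconc
  -- The increments of `h_U` are even, so a positive one is at least `2`.
  have hchar : IsCharacteristic G (fun u => K u + σ * (2 * G u v)) := fun u => by
    obtain ⟨t, ht⟩ := hK u
    exact ⟨t + σ * G u v, by linear_combination ht⟩
  obtain ⟨p, hp⟩ := even_cubeWeight hsym hK E
  obtain ⟨q, hq⟩ := even_cubeWeight hsym hchar E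
  obtain ⟨r, hr⟩ := hK v
  have hinc := increment_bound G hsym hoff hforest ε hε hatt v E hv K σ hσ
  by_cases hm1 : m = 1 ∧ hUcube G K E = hUcube G (chTrans G K (dirVec v (σ * m))) E
  · have := htuned hm1.2
    rwa [hm1.1, mul_one] at this
  have hmax' : cubeWeight G K E ≤ σ * m * K v + m ^ 2 * G v v +
      cubeWeight G (fun u => K u + σ * m * (2 * G u v)) E := by
    rw [hUcube_dirVec hsym hneg, hUcube_eq hsym hneg, add_le_add_iff_left, Int.cast_le, mul_pow,
      hσ2, one_mul] at hmax
    exact hmax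
  have hpos : 0 < σ * K v + G v v + cubeWeight G (fun u => K u + σ * (2 * G u v)) E
      - cubeWeight G K E := by
    rcases hm.eq_or_lt with h | h
    · subst h
      have hne : ¬ hUcube G K E = hUcube G (chTrans G K (dirVec v (σ * 1))) E := fun h =>
        hm1 ⟨rfl, h⟩
      rw [hUcube_dirVec hsym hneg, hUcube_eq hsym hneg, add_right_inj, Int.cast_inj, mul_pow,
        hσ2] at hne
      simp only [mul_one, one_pow, one_mul] at hne hmax'
      have := lt_of_le_of_ne hmax' hne
      linarith
    · have h1 : 0 < m * (m - 1) * (-G v v) := by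
        have : 0 < m - 1 := by linarith
        have : 0 < -G v v := by linarith
        positivity
      refine pos_of_mul_pos_right (a := m) ?_ (by linarith)
      nlinarith
  have hge : 2 ≤ σ * K v + G v v + cubeWeight G (fun u => K u + σ * (2 * G u v)) E
      - cubeWeight G K E := by
    rcases hσ with rfl | rfl <;> omega
  unfold hVcube
  rw [knotTrans_chTrans, hUcube_dirVec hsym hneg, hUcube_eq hsym hneg, add_le_add_iff_left,
    Int.cast_le, hσ2]
  have hk : knotTrans K ε v = K v + 2 * ε v := rfl
  rw [hk]
  linarith

/-- Proposition `tuningFiltration`: for a choice of maxima `m̃` in the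
direction `v` tuned to `v₀` (on a negative definite forest with at most one attaching vertex
of `v₀` per component), if `m̃([K,E]) > 0` then `h_V([K+v,E]) ≥ h_V([K,E])`
(equivalently `h_V([K,E∪{v}]) = h_V([K,E])`), and if `m̃([K,E]) < 0` then
`h_V([K−v,E]) ≥ h_V([K,E])` (equivalently `h_V([K−v,E∪{v}]) = h_V([K,E])`); hence the
corresponding step in a contraction homotopy is filtered with respect to both `h_U` and `h_V`. -/
theorem tuned_choice_hV_filtered [Fintype V] [DecidableEq V]
    (G : Matrix V V ℤ) (hsym : G.IsSymm) (hneg : MatNegDef G)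
    (hoff : ∀ u w : V, u ≠ w → G u w = 0 ∨ G u w = 1)
    (hforest : (graphOf G).IsAcyclic)
    (ε : V → ℤ) (hε : ∀ u, ε u = 0 ∨ ε u = 1)
    (hatt : ∀ u w : V, ε u = 1 → ε w = 1 → (graphOf G).Reachable u w → u = w)
    (v : V) (mt : (V → ℤ) → Finset V → ℤ)
    (hmt_orbit : ∀ K, IsCharacteristic G K → ∀ E : Finset V, v ∉ E → ∀ i : ℤ,
      mt (chTrans G K (dirVec v i)) E = mt K E - i)
    (hmt_max : ∀ K, IsCharacteristic G K → ∀ E : Finset V, v ∉ E → ∀ i : ℤ,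
      hUcube G (chTrans G K (dirVec v i)) E ≤ hUcube G (chTrans G K (dirVec v (mt K E))) E)
    (hmt_tuned : ∀ K, IsCharacteristic G K → ∀ E : Finset V, v ∉ E → ∀ i : ℤ,
      hUcube G (chTrans G K (dirVec v i)) E = hUcube G (chTrans G K (dirVec v (mt K E))) E →
      hVcube G ε (chTrans G K (dirVec v i)) E ≤
        hVcube G ε (chTrans G K (dirVec v (mt K E))) E) :
    ∀ K, IsCharacteristic G K → ∀ E : Finset V, v ∉ E →
      (mt K E > 0 →
        hVcube G ε (chTrans G K (dirVec v 1)) E ≥ hVcube G ε K E ∧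
        hVcube G ε K (insert v E) = hVcube G ε K E) ∧
      (mt K E < 0 →
        hVcube G ε (chTrans G K (dirVec v (-1))) E ≥ hVcube G ε K E ∧
        hVcube G ε (chTrans G K (dirVec v (-1))) (insert v E) = hVcube G ε K E) := by
  intro K hK E hv
  have hzero : chTrans G K (dirVec v 0) = K := by
    ext u
    simp [chTrans_dirVec]
  have step : ∀ σ m : ℤ, (σ = 1 ∨ σ = -1) → 1 ≤ m → mt K E = σ * m →
      hVcube G ε K E ≤ hVcube G ε (chTrans G K (dirVec v σ)) E := by
    intro σ m hσ hm h
    have h1 := hmt_max K hK E hv 0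
    have h2 := hmt_tuned K hK E hv 0
    rw [hzero, h] at h1 h2
    exact hVcube_step G hsym hneg hoff hforest ε hε hatt v E hv K hK σ m hσ hm h1 h2
  have hins : ∀ L, hVcube G ε L (insert v E) =
      min (hVcube G ε L E) (hVcube G ε (chTrans G L (dirVec v 1)) E) := fun L => by
    rw [hVcube, hUcube_insert G _ hv, ← knotTrans_chTrans]
    rfl
  have hback : chTrans G (chTrans G K (dirVec v (-1))) (dirVec v 1) = K := by
    ext u
    simp [chTrans_dirVec]
  constructor
  · intro h
    have := step 1 (mt K E) (Or.inl rfl) h (by ring)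
    exact ⟨this, by rw [hins, min_eq_left this]⟩
  · intro h
    have := step (-1) (-mt K E) (Or.inr rfl) (by linarith) (by ring)
    exact ⟨this, by rw [hins, hback, min_eq_right this]⟩
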